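/- Let m, c, k, ca, ω be positive reals with ω² > 2k/m − ca·(2c + ca)/m², set s = iω, and let z₁, z₂ : ℝ → ℂ. Assume: z₁ and z₂ are twice differentiable with continuous first and second derivatives on [0,∞); z₁, z₁', z₂, z₂', z₂'' are all of exponential order a for some real a with a < 0; z₁(0) = 0, z₂(0) = 0 and z₂'(0) = 0; the differential equation z₂''(t) + ((c + ca)/m)·z₂'(t) + (k/m)·z₂(t) = (c/m)·z₁'(t) + (k/m)·z₁(t) holds for all t ≥ 0; and L[z₁](s) ≠ 0. Then ‖L[z₂](s) / L[z₁](s)‖ < 1, i.e., the platoon with the non-autonomous leader-velocity-communication controller is stable at frequency ω. -/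

import Mathlib

open MeasureTheory

/-- The Laplace transform of `f : ℝ → ℂ` at `s : ℂ`:  `∫ t in (0,∞), e^{-s t} f t`. -/
noncomputable def laplace (f : ℝ → ℂ) (s : ℂ) : ℂ :=
  ∫ t in Set.Ioi (0 : ℝ), Complex.exp (-(s * t)) * f t

/-- `f` is of exponential order `a`: there is `M > 0` with `‖f t‖ ≤ M e^{a t}` for `t ≥ 0`. -/
def ExpOrder (f : ℝ → ℂ) (a : ℝ) : Prop :=
  ∃ M > 0, ∀ t ≥ (0 : ℝ), ‖f t‖ ≤ M * Real.exp (a * t)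

/-!
Put `s = iω`, `p = (c + ca) / m`, `q = k / m` and `r = c / m`. The Laplace transform turns the
differential equation, with zero initial data, into
`(s² + p s + q) L[z₂](s) = (r s + q) L[z₁](s)`. Since
`‖s² + p s + q‖² - ‖r s + q‖² = ω² (ω² - (2 q - (p² - r²)))` and `p² - r² = ca (2 c + ca) / m²`,
the frequency condition says exactly that the numerator of the transfer function is smaller in
modulus than its denominator.
-/

section LaplaceTransform

variable {f g f' : ℝ → ℂ} {s F G : ℂ}

/-- Absolute convergence of the Laplace integral of `f` at `s`. Where it fails, `laplace f s` is a
junk value. -/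
def LaplaceConvergent (f : ℝ → ℂ) (s : ℂ) : Prop :=
  IntegrableOn (fun t : ℝ => Complex.exp (-(s * t)) * f t) (Set.Ioi 0)

/-- The Laplace integral of `f` converges absolutely at `s` and its value is `F`. Bundling
convergence with the value lets linearity be applied to both at once. -/
def HasLaplace (f : ℝ → ℂ) (s F : ℂ) : Prop :=
  LaplaceConvergent f s ∧ laplace f s = F

lemma LaplaceConvergent.hasLaplace (hf : LaplaceConvergent f s) : HasLaplace f s (laplace f s) :=
  ⟨hf, rfl⟩

lemma HasLaplace.add (hf : HasLaplace f s F) (hg : HasLaplace g s G) :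
    HasLaplace (fun t => f t + g t) s (F + G) := by
  obtain ⟨hf, rfl⟩ := hf
  obtain ⟨hg, rfl⟩ := hg
  simp only [HasLaplace, LaplaceConvergent, laplace, mul_add]
  exact ⟨Integrable.add hf hg, integral_add hf hg⟩

lemma HasLaplace.const_mul (hf : HasLaplace f s F) (b : ℂ) :
    HasLaplace (fun t => b * f t) s (b * F) := by
  obtain ⟨hf, rfl⟩ := hf
  simp only [HasLaplace, LaplaceConvergent, laplace, mul_left_comm _ b]
  exact ⟨Integrable.const_mul hf b, integral_const_mul b _⟩

lemma HasLaplace.congr (hf : HasLaplace f s F) (hfg : ∀ t ∈ Set.Ioi (0 : ℝ), f t = g t) :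
    HasLaplace g s F := by
  obtain ⟨hf, rfl⟩ := hf
  have hEqOn : Set.EqOn (fun t : ℝ => Complex.exp (-(s * t)) * f t)
      (fun t : ℝ => Complex.exp (-(s * t)) * g t) (Set.Ioi 0) :=
    fun t ht => congrArg (Complex.exp (-(s * t)) * ·) (hfg t ht)
  exact ⟨IntegrableOn.congr_fun hf hEqOn measurableSet_Ioi,
    (setIntegral_congr_fun measurableSet_Ioi hEqOn).symm⟩

lemma ExpOrder.laplaceConvergent {a : ℝ} (he : ExpOrder f a) (has : a < s.re)
    (hf : AEStronglyMeasurable f (volume.restrict (Set.Ioi 0))) : LaplaceConvergent f s := by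
  obtain ⟨M, -, hM⟩ := he
  have hdom : IntegrableOn (fun t => M * Real.exp ((a - s.re) * t)) (Set.Ioi 0) :=
    (integrableOn_exp_mul_Ioi (sub_neg.2 has) 0).const_mul M
  have hker : Continuous fun t : ℝ => Complex.exp (-(s * t)) := by fun_prop
  refine hdom.mono' (hker.aestronglyMeasurable.mul hf) ?_
  filter_upwards [ae_restrict_mem measurableSet_Ioi] with t ht
  calc ‖Complex.exp (-(s * t)) * f t‖
      = Real.exp (-(s.re * t)) * ‖f t‖ := by simp [Complex.norm_exp]
    _ ≤ Real.exp (-(s.re * t)) * (M * Real.exp (a * t)) := by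
        gcongr
        exact hM t ht.le
    _ = M * Real.exp ((a - s.re) * t) := by
        rw [mul_left_comm, ← Real.exp_add]
        ring_nf

lemma hasDerivAt_exp_neg_mul_mul {x : ℝ} {y : ℂ} (hf : HasDerivAt f y x) :
    HasDerivAt (fun t : ℝ => Complex.exp (-(s * t)) * f t)
      (Complex.exp (-(s * x)) * y - s * (Complex.exp (-(s * x)) * f x)) x := by
  have hexponent : HasDerivAt (fun t : ℝ => -(s * (t : ℂ))) (-(s * 1)) x :=
    ((hasDerivAt_id x).ofReal_comp.const_mul s).neg
  exact (hexponent.cexp.mul hf).congr_deriv (by ring)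

lemma laplace_of_hasDerivAt_Ioi (hcont : ContinuousWithinAt f (Set.Ici 0) 0)
    (hderiv : ∀ t ∈ Set.Ioi (0 : ℝ), HasDerivAt f (f' t) t)
    (hf : LaplaceConvergent f s) (hf' : LaplaceConvergent f' s) :
    laplace f' s = s * laplace f s - f 0 := by
  have hker : Continuous fun t : ℝ => Complex.exp (-(s * t)) := by fun_prop
  have hprod := fun t ht => hasDerivAt_exp_neg_mul_mul (s := s) (hderiv t ht)
  have hint := Integrable.sub hf' (Integrable.const_mul hf s)
  -- An integrable function with integrable derivative vanishes at infinity: no boundary term there.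
  have hlim := tendsto_zero_of_hasDerivAt_of_integrableOn_Ioi hprod hint hf
  have hFTC : ∫ t in Set.Ioi (0 : ℝ),
      (Complex.exp (-(s * t)) * f' t - s * (Complex.exp (-(s * t)) * f t))
        = 0 - Complex.exp (-(s * (0 : ℝ))) * f 0 :=
    integral_Ioi_of_hasDerivAt_of_tendsto (hker.continuousWithinAt.mul hcont) hprod hint hlim
  rw [integral_sub hf' (Integrable.const_mul hf s), integral_const_mul, Complex.ofReal_zero,
    mul_zero, neg_zero, Complex.exp_zero, one_mul] at hFTC
  unfold laplace
  linear_combination hFTC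

lemma laplace_of_hasDerivWithinAt_Ici
    (hderiv : ∀ t ∈ Set.Ici (0 : ℝ), HasDerivWithinAt f (f' t) (Set.Ici 0) t)
    (hf : LaplaceConvergent f s) (hf' : LaplaceConvergent f' s) :
    laplace f' s = s * laplace f s - f 0 :=
  laplace_of_hasDerivAt_Ioi (hderiv 0 Set.self_mem_Ici).continuousWithinAt
    (fun t ht => (hderiv t (Set.Ioi_subset_Ici_self ht)).hasDerivAt (Ici_mem_nhds ht)) hf hf'

end LaplaceTransform

lemma laplace_transfer_of_ode {s p q r q' : ℂ} {z₁ z₂ z₁' z₂' z₂'' : ℝ → ℂ}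
    (hdz₁ : ∀ t ∈ Set.Ici (0 : ℝ), HasDerivWithinAt z₁ (z₁' t) (Set.Ici 0) t)
    (hdz₂ : ∀ t ∈ Set.Ici (0 : ℝ), HasDerivWithinAt z₂ (z₂' t) (Set.Ici 0) t)
    (hdz₂' : ∀ t ∈ Set.Ici (0 : ℝ), HasDerivWithinAt z₂' (z₂'' t) (Set.Ici 0) t)
    (hz₁ : LaplaceConvergent z₁ s) (hz₁' : LaplaceConvergent z₁' s)
    (hz₂ : LaplaceConvergent z₂ s) (hz₂' : LaplaceConvergent z₂' s)
    (hinit₁ : z₁ 0 = 0) (hinit₂ : z₂ 0 = 0) (hinit₂' : z₂' 0 = 0)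
    (hode : ∀ t > (0 : ℝ), z₂'' t + p * z₂' t + q * z₂ t = r * z₁' t + q' * z₁ t) :
    (s ^ 2 + p * s + q) * laplace z₂ s = (r * s + q') * laplace z₁ s := by
  obtain ⟨hz₂'', hLode⟩ : HasLaplace z₂'' s (r * laplace z₁' s + q' * laplace z₁ s
      + -p * laplace z₂' s + -q * laplace z₂ s) :=
    ((((hz₁'.hasLaplace.const_mul r).add (hz₁.hasLaplace.const_mul q')).add
      (hz₂'.hasLaplace.const_mul (-p))).add (hz₂.hasLaplace.const_mul (-q))).congr
      fun t ht => by linear_combination -hode t ht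
  rw [laplace_of_hasDerivWithinAt_Ici hdz₂' hz₂' hz₂'',
    laplace_of_hasDerivWithinAt_Ici hdz₂ hz₂ hz₂', laplace_of_hasDerivWithinAt_Ici hdz₁ hz₁ hz₁',
    hinit₁, hinit₂, hinit₂'] at hLode
  linear_combination hLode

lemma norm_numerator_lt_norm_denominator_iff {p q r ω : ℝ} (hω : ω ≠ 0) :
    ‖(r : ℂ) * (Complex.I * ω) + q‖ < ‖(Complex.I * ω) ^ 2 + p * (Complex.I * ω) + q‖ ↔
      2 * q - (p ^ 2 - r ^ 2) < ω ^ 2 := by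
  have hnum : ‖(r : ℂ) * (Complex.I * ω) + q‖ ^ 2 = q ^ 2 + (r * ω) ^ 2 := by
    rw [← Complex.normSq_eq_norm_sq, ← Complex.normSq_add_mul_I]
    push_cast
    ring_nf
  have hden : ‖(Complex.I * ω) ^ 2 + p * (Complex.I * ω) + q‖ ^ 2
      = (q - ω ^ 2) ^ 2 + (p * ω) ^ 2 := by
    rw [← Complex.normSq_eq_norm_sq, ← Complex.normSq_add_mul_I, mul_pow, Complex.I_sq]
    push_cast
    ring_nf
  have hdiff : (q - ω ^ 2) ^ 2 + (p * ω) ^ 2 - (q ^ 2 + (r * ω) ^ 2)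
      = ω ^ 2 * (ω ^ 2 - (2 * q - (p ^ 2 - r ^ 2))) := by ring
  rw [← sq_lt_sq₀ (norm_nonneg _) (norm_nonneg _), hnum, hden, ← sub_pos, hdiff,
    mul_pos_iff_of_pos_left (sq_pos_of_ne_zero hω), sub_pos]

lemma norm_div_lt_one_of_mul_eq_mul {𝕜 : Type*} [NormedField 𝕜] {N D A B : 𝕜}
    (hA : A ≠ 0) (hND : ‖N‖ < ‖D‖) (h : D * B = N * A) : ‖B / A‖ < 1 := by
  have hD : 0 < ‖D‖ := (norm_nonneg N).trans_lt hND
  have hratio : B / A = N / D :=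
    (div_eq_div_iff hA (norm_pos_iff.1 hD)).2 (by linear_combination h)
  rwa [hratio, norm_div, div_lt_one hD]

theorem stmt15_general {p q r ω : ℝ} (hω : ω ≠ 0) (hfreq : 2 * q - (p ^ 2 - r ^ 2) < ω ^ 2)
    {z₁ z₂ z₁' z₂' z₂'' : ℝ → ℂ}
    (hdz₁ : ∀ t ∈ Set.Ici (0 : ℝ), HasDerivWithinAt z₁ (z₁' t) (Set.Ici 0) t)
    (hdz₂ : ∀ t ∈ Set.Ici (0 : ℝ), HasDerivWithinAt z₂ (z₂' t) (Set.Ici 0) t)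
    (hdz₂' : ∀ t ∈ Set.Ici (0 : ℝ), HasDerivWithinAt z₂' (z₂'' t) (Set.Ici 0) t)
    (hz₁ : LaplaceConvergent z₁ (Complex.I * ω)) (hz₁' : LaplaceConvergent z₁' (Complex.I * ω))
    (hz₂ : LaplaceConvergent z₂ (Complex.I * ω)) (hz₂' : LaplaceConvergent z₂' (Complex.I * ω))
    (hinit₁ : z₁ 0 = 0) (hinit₂ : z₂ 0 = 0) (hinit₂' : z₂' 0 = 0)
    (hode : ∀ t > (0 : ℝ), z₂'' t + p * z₂' t + q * z₂ t = r * z₁' t + q * z₁ t)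
    (hL : laplace z₁ (Complex.I * ω) ≠ 0) :
    ‖laplace z₂ (Complex.I * ω) / laplace z₁ (Complex.I * ω)‖ < 1 :=
  norm_div_lt_one_of_mul_eq_mul hL ((norm_numerator_lt_norm_denominator_iff hω).2 hfreq)
    (laplace_transfer_of_ode hdz₁ hdz₂ hdz₂' hz₁ hz₁' hz₂ hz₂' hinit₁ hinit₂ hinit₂' hode)

theorem stmt15 (m c k ca ω : ℝ) (hm : 0 < m) (hc : 0 < c) (hk : 0 < k) (hca : 0 < ca) (hω : 0 < ω)
    (hfreq : 2 * k / m - ca * (2 * c + ca) / m ^ 2 < ω ^ 2)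
    (s : ℂ) (hs : s = Complex.I * (ω : ℂ)) (a : ℝ) (ha : a < 0)
    (z₁ z₂ z₁' z₁'' z₂' z₂'' : ℝ → ℂ)
    (hdz₁ : ∀ t ∈ Set.Ici (0 : ℝ), HasDerivWithinAt z₁ (z₁' t) (Set.Ici 0) t)
    (hdz₁' : ∀ t ∈ Set.Ici (0 : ℝ), HasDerivWithinAt z₁' (z₁'' t) (Set.Ici 0) t)
    (hdz₂ : ∀ t ∈ Set.Ici (0 : ℝ), HasDerivWithinAt z₂ (z₂' t) (Set.Ici 0) t)
    (hdz₂' : ∀ t ∈ Set.Ici (0 : ℝ), HasDerivWithinAt z₂' (z₂'' t) (Set.Ici 0) t)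
    (hcz₁' : ContinuousOn z₁' (Set.Ici 0)) (hcz₁'' : ContinuousOn z₁'' (Set.Ici 0))
    (hcz₂' : ContinuousOn z₂' (Set.Ici 0)) (hcz₂'' : ContinuousOn z₂'' (Set.Ici 0))
    (hez₁ : ExpOrder z₁ a) (hez₁' : ExpOrder z₁' a)
    (hez₂ : ExpOrder z₂ a) (hez₂' : ExpOrder z₂' a) (hez₂'' : ExpOrder z₂'' a)
    (hinit₁ : z₁ 0 = 0) (hinit₂ : z₂ 0 = 0) (hinit₂' : z₂' 0 = 0)
    (hode : ∀ t ≥ (0 : ℝ),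
      z₂'' t + (((c + ca) / m : ℝ) : ℂ) * z₂' t + ((k / m : ℝ) : ℂ) * z₂ t
        = ((c / m : ℝ) : ℂ) * z₁' t + ((k / m : ℝ) : ℂ) * z₁ t)
    (hL : laplace z₁ s ≠ 0) :
    ‖laplace z₂ s / laplace z₁ s‖ < 1 := by
  subst hs
  have convergent {f : ℝ → ℂ} (hf : ContinuousOn f (Set.Ici 0)) (he : ExpOrder f a) :
      LaplaceConvergent f (Complex.I * ω) :=
    he.laplaceConvergent (by simpa using ha)
      ((hf.mono Set.Ioi_subset_Ici_self).aestronglyMeasurable measurableSet_Ioi)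
  exact stmt15_general hω.ne' (by convert hfreq using 1; ring) hdz₁ hdz₂ hdz₂'
    (convergent (HasDerivWithinAt.continuousOn hdz₁) hez₁) (convergent hcz₁' hez₁')
    (convergent (HasDerivWithinAt.continuousOn hdz₂) hez₂) (convergent hcz₂' hez₂')
    hinit₁ hinit₂ hinit₂' (fun t ht => hode t ht.le) hL
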